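/- For every real number q > 1/2, ∫₀¹ (x^{3q−2} + 1)·log(x^q + 1)/(x^{3q} + 1) dx = (1/(36q))·(ψ'((6q−1)/(6q)) − ψ'((3q−1)/(6q))) + (1/q)·Σ_{n=0}^{∞} 3^n·Γ(n + 3 − 1/q)·Γ(n + 1/q)/(2n+2)! · (ψ(2n + 3) − ψ(n + 3 − 1/q)). -/

import Mathlib

/-- The digamma function ψ(x) = Γ'(x)/Γ(x). -/
noncomputable def digamma (x : ℝ) : ℝ := deriv Real.Gamma x / Real.Gamma x

/-- The trigamma function ψ'(x), the derivative of the digamma function. -/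
noncomputable def trigamma (x : ℝ) : ℝ := deriv digamma x

open MeasureTheory Set Filter Topology

lemma aux_diffGamma {x : ℝ} (hx : 0 < x) : DifferentiableAt ℝ Real.Gamma x :=
  Real.differentiableAt_Gamma (fun m => by
    have : (0:ℝ) ≤ m := Nat.cast_nonneg m
    linarith)

lemma aux_digamma_add_one {x : ℝ} (hx : 0 < x) : digamma (x + 1) = digamma x + 1 / x := by
  have hG := Real.Gamma_pos_of_pos hx
  have h1 : HasDerivAt (fun y : ℝ => Real.Gamma (y + 1)) (deriv Real.Gamma (x + 1)) x := by
    have := (aux_diffGamma (x := x + 1) (by linarith)).hasDerivAt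
    exact this.comp_add_const x 1
  have h2 : HasDerivAt (fun y : ℝ => y * Real.Gamma y) (1 * Real.Gamma x + x * deriv Real.Gamma x) x :=
    (hasDerivAt_id x).mul (aux_diffGamma hx).hasDerivAt
  have h3 : (fun y : ℝ => Real.Gamma (y + 1)) =ᶠ[𝓝 x] (fun y : ℝ => y * Real.Gamma y) := by
    filter_upwards [lt_mem_nhds hx] with y hy
    exact Real.Gamma_add_one hy.ne'
  have h4 := h1.unique (h2.congr_of_eventuallyEq h3)
  unfold digamma
  rw [h4, Real.Gamma_add_one hx.ne']
  field_simp
  ring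

lemma aux_digamma_mono : MonotoneOn digamma (Ioi 0) := by
  have h := Real.convexOn_log_Gamma.monotoneOn_deriv (fun x hx => by
    have hx' : (0:ℝ) < x := hx
    exact (aux_diffGamma hx').log (Real.Gamma_pos_of_pos hx').ne')
  refine h.congr ?_
  intro x hx
  have hx' : (0:ℝ) < x := hx
  unfold digamma
  exact ((aux_diffGamma hx').hasDerivAt.log (Real.Gamma_pos_of_pos hx').ne').deriv

lemma aux_digamma_add_nat {x : ℝ} (hx : 0 < x) (N : ℕ) :
    digamma (x + N) = digamma x + ∑ n ∈ Finset.range N, 1 / (x + n) := by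
  induction N with
  | zero => simp
  | succ N ih =>
    rw [Finset.sum_range_succ, ← add_assoc, ← ih, Nat.cast_succ, ← add_assoc]
    exact aux_digamma_add_one (by positivity)

lemma aux_digamma_diff_tendsto {x : ℝ} (hx : 0 < x) :
    Tendsto (fun N : ℕ => digamma (1 + N) - digamma (x + N)) atTop (𝓝 0) := by
  obtain ⟨m, hm⟩ := exists_nat_ge x
  have hb : ∀ N : ℕ, 1 ≤ N → |digamma (1 + N) - digamma (x + N)| ≤ ((m:ℝ) + 1) / N := by
    intro N hN
    have hN' : (0:ℝ) < N := by exact_mod_cast hN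
    have hm0 : (0:ℝ) ≤ m := Nat.cast_nonneg m
    have e := aux_digamma_add_nat hN' (m + 1)
    have hs : ∑ n ∈ Finset.range (m + 1), 1 / ((N:ℝ) + n) ≤ ((m:ℝ) + 1) / N := by
      calc _ ≤ ∑ n ∈ Finset.range (m + 1), 1 / (N:ℝ) := by
            apply Finset.sum_le_sum
            intro i _
            apply one_div_le_one_div_of_le hN'
            have : (0:ℝ) ≤ i := Nat.cast_nonneg i
            linarith
        _ = _ := by simp; ring
    push_cast at e
    have a1 := aux_digamma_mono (a := (N:ℝ)) (b := 1 + N) hN' (by simp; linarith) (by linarith)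
    have a2 := aux_digamma_mono (a := (N:ℝ)) (b := x + N) hN' (by simp; linarith) (by linarith)
    have a3 := aux_digamma_mono (a := 1 + (N:ℝ)) (b := N + (m + 1)) (by simp; linarith) (by simp; linarith) (by linarith)
    have a4 := aux_digamma_mono (a := x + (N:ℝ)) (b := N + (m + 1)) (by simp; linarith) (by simp; linarith) (by linarith)
    rw [abs_le]
    constructor <;> linarith
  apply squeeze_zero_norm' (a := fun N : ℕ => ((m:ℝ) + 1) / N)
  · filter_upwards [eventually_ge_atTop 1] with N hN
    exact hb N hN
  · exact tendsto_const_div_atTop_nhds_zero_nat _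

lemma aux_summable_sq {x : ℝ} (hx : 0 < x) : Summable (fun n : ℕ => 1 / (x + n) ^ 2) := by
  have := (Real.summable_one_div_nat_add_rpow x 2).2 (by norm_num)
  refine this.congr ?_
  intro n
  have h : (0:ℝ) < n + x := by positivity
  rw [abs_of_pos h, add_comm]
  norm_num

lemma aux_trigamma {x : ℝ} (hx : 0 < x) : trigamma x = ∑' n : ℕ, 1 / (x + n) ^ 2 := by
  set δ := min x 1 / 2 with hδ
  have hδ0 : 0 < δ := by positivity
  have hδx : δ < x := by
    have := min_le_left x 1
    have : 0 < min x 1 := by positivity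
    linarith
  have hδ1 : δ < 1 := by
    have := min_le_right x 1
    have : 0 < min x 1 := by positivity
    linarith
  let g : ℕ → ℝ → ℝ := fun n y => 1 / (1 + n) - 1 / (y + n)
  let g' : ℕ → ℝ → ℝ := fun n y => 1 / (y + n) ^ 2
  have hg : ∀ n y, y ∈ Ioi δ → HasDerivAt (g n) (g' n y) y := by
    intro n y hy
    have hy0 : 0 < y := hδ0.trans hy
    have : y + n ≠ 0 := by positivity
    have h1 : HasDerivAt (fun y : ℝ => y + n) 1 y := (hasDerivAt_id y).add_const _
    have h2 := (h1.inv this).const_sub (1 / (1 + (n:ℝ)))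
    refine (h2.congr_deriv ?_).congr_of_eventuallyEq (Eventually.of_forall fun z => ?_)
    · simp only [g']; ring
    · simp only [g, one_div, Pi.inv_apply]
  have hg' : ∀ n y, y ∈ Ioi δ → ‖g' n y‖ ≤ 1 / (δ + n) ^ 2 := by
    intro n y hy
    have hy' : δ < y := hy
    simp only [g']
    rw [Real.norm_of_nonneg (by positivity)]
    gcongr
  have hu := aux_summable_sq hδ0
  have h0 : Summable fun n => g n 1 := by simp [g]
  have key := hasDerivAt_tsum_of_isPreconnected hu isOpen_Ioi isPreconnected_Ioi hg hg' (y₀ := 1) hδ1 h0 hδx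
  have hsum : ∀ y ∈ Ioi δ, Summable fun n => g n y := fun y hy =>
    summable_of_summable_hasDerivAt_of_isPreconnected hu isOpen_Ioi isPreconnected_Ioi hg hg' (y₀ := 1) hδ1 h0 hy
  have heq : ∀ y ∈ Ioi δ, digamma y = digamma 1 + ∑' n, g n y := by
    intro y hy
    have hy0 : 0 < y := hδ0.trans hy
    have t1 := (hsum y hy).hasSum.tendsto_sum_nat
    have t2 : Tendsto (fun N : ℕ => ∑ n ∈ Finset.range N, g n y) atTop (𝓝 (0 + (digamma y - digamma 1))) := by
      refine ((aux_digamma_diff_tendsto hy0).add_const (digamma y - digamma 1)).congr ?_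
      intro N
      rw [aux_digamma_add_nat hy0, aux_digamma_add_nat one_pos]
      simp only [g, Finset.sum_sub_distrib]
      ring
    have := tendsto_nhds_unique t1 t2
    linarith
  unfold trigamma
  have : HasDerivAt digamma (∑' n, g' n x) x := by
    refine (key.const_add (digamma 1)).congr_of_eventuallyEq ?_
    filter_upwards [lt_mem_nhds hδx] with y hy using heq y hy
  exact this.deriv

lemma aux_int_rpow_log {p : ℝ} (hp : 0 < p) :
    IntegrableOn (fun x : ℝ => x ^ (p - 1) * Real.log x) (Ioo 0 1) ∧
    ∫ x in Ioo (0:ℝ) 1, x ^ (p - 1) * Real.log x = -(1 / p ^ 2) := by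
  let G : ℝ → ℝ := fun x => (x ^ p - x ^ p * Real.log (x ^ p)) / p ^ 2
  have hc : ContinuousOn G (Icc 0 1) := by
    have h1 : Continuous (fun x : ℝ => x ^ p) := Real.continuous_rpow_const hp.le
    have h2 : Continuous (fun x : ℝ => x ^ p * Real.log (x ^ p)) :=
      Real.continuous_mul_log.comp h1
    exact ((h1.sub h2).div_const _).continuousOn
  have hd : ∀ x ∈ Ioo (0:ℝ) 1, HasDerivAt G (-(x ^ (p - 1) * Real.log x)) x := by
    intro x hx
    have hx0 := hx.1
    have h1 : HasDerivAt (fun x : ℝ => x ^ p) (p * x ^ (p - 1)) x :=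
      Real.hasDerivAt_rpow_const (Or.inl hx0.ne')
    have h2 := (Real.hasDerivAt_mul_log (x := x ^ p) (by positivity)).comp x h1
    refine ((h1.sub h2).div_const (p ^ 2)).congr_deriv ?_
    rw [Real.log_rpow hx0]
    field_simp
    ring
  have hpos : ∀ x ∈ Ioo (0:ℝ) 1, 0 ≤ -(x ^ (p - 1) * Real.log x) := by
    intro x hx
    have := Real.log_nonpos hx.1.le hx.2.le
    have h2 : 0 ≤ x ^ (p - 1) := Real.rpow_nonneg hx.1.le _
    nlinarith
  have hi : IntegrableOn (fun x : ℝ => -(x ^ (p - 1) * Real.log x)) (Ioc 0 1) :=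
    intervalIntegral.integrableOn_deriv_of_nonneg hc hd hpos
  have hF := intervalIntegral.integral_eq_sub_of_hasDerivAt_of_le zero_le_one hc hd
    ((intervalIntegrable_iff_integrableOn_Ioc_of_le zero_le_one).2 hi)
  constructor
  · have := (hi.mono_set Ioo_subset_Ioc_self).neg
    simpa using this
  · rw [intervalIntegral.integral_neg, intervalIntegral.integral_of_le zero_le_one,
      integral_Ioc_eq_integral_Ioo] at hF
    simp [G, hp.ne'] at hF
    rw [one_div]
    linarith

lemma aux_K {p w : ℝ} (hp : 0 < p) (hw : 0 < w) :
    IntegrableOn (fun x : ℝ => x ^ (p - 1) * Real.log x / (x ^ w + 1)) (Ioo 0 1) ∧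
    HasSum (fun k : ℕ => (-1 : ℝ) ^ k * -(1 / (p + w * k) ^ 2))
      (∫ x in Ioo (0:ℝ) 1, x ^ (p - 1) * Real.log x / (x ^ w + 1)) := by
  have hpk : ∀ k : ℕ, 0 < p + w * k := fun k => by positivity
  let F : ℕ → ℝ → ℝ := fun k x => (-1 : ℝ) ^ k * (x ^ (p + w * k - 1) * Real.log x)
  have hFi : ∀ k, IntegrableOn (F k) (Ioo 0 1) := fun k =>
    (aux_int_rpow_log (hpk k)).1.const_mul _
  have hFn : ∀ k, ∫ x in Ioo (0:ℝ) 1, ‖F k x‖ = 1 / (p + w * k) ^ 2 := by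
    intro k
    rw [← neg_neg (1 / (p + w * k) ^ 2), ← (aux_int_rpow_log (hpk k)).2, ← integral_neg]
    apply setIntegral_congr_fun measurableSet_Ioo
    intro x hx
    have := Real.log_nonpos hx.1.le hx.2.le
    have h2 : 0 ≤ x ^ (p + w * k - 1) := Real.rpow_nonneg hx.1.le _
    simp only [F, norm_mul, norm_pow, norm_neg, norm_one, one_pow, one_mul]
    rw [Real.norm_of_nonneg h2, Real.norm_of_nonpos this]
    ring
  have hs : Summable fun k => ∫ x in Ioo (0:ℝ) 1, ‖F k x‖ := by
    simp_rw [hFn]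
    have := (aux_summable_sq (x := p / w) (by positivity)).mul_left (1 / w ^ 2)
    refine this.congr ?_
    intro k
    have := hpk k
    have h3 : p / w + k ≠ 0 := by positivity
    field_simp
  have key := hasSum_integral_of_summable_integral_norm hFi hs
  have hF : ∀ k, ∫ x in Ioo (0:ℝ) 1, F k x = (-1 : ℝ) ^ k * -(1 / (p + w * k) ^ 2) := by
    intro k
    rw [← (aux_int_rpow_log (hpk k)).2, ← integral_const_mul]
  simp_rw [hF] at key
  constructor
  · refine Integrable.mono' (g := fun x => ‖x ^ (p - 1) * Real.log x‖) (aux_int_rpow_log hp).1.norm ?_ ?_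
    · apply Measurable.aestronglyMeasurable
      fun_prop
    · filter_upwards [ae_restrict_mem measurableSet_Ioo] with x hx
      rw [norm_div]
      apply div_le_self (norm_nonneg _)
      have : 0 ≤ x ^ w := Real.rpow_nonneg hx.1.le _
      rw [Real.norm_of_nonneg (by linarith)]
      linarith
  · suffices e : ∫ x in Ioo (0:ℝ) 1, x ^ (p - 1) * Real.log x / (x ^ w + 1) =
        ∫ x in Ioo (0:ℝ) 1, ∑' i, F i x by rw [e]; exact key
    apply setIntegral_congr_fun measurableSet_Ioo
    intro x hx
    have hx0 := hx.1
    have h1 : x ^ w < 1 := Real.rpow_lt_one hx0.le hx.2 hw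
    have h0 : 0 < x ^ w := Real.rpow_pos_of_pos hx0 _
    have hg := (hasSum_geometric_of_abs_lt_one (r := -(x ^ w)) (by rw [abs_neg, abs_of_pos h0]; exact h1)).mul_left
      (x ^ (p - 1) * Real.log x)
    have : ∀ k : ℕ, F k x = x ^ (p - 1) * Real.log x * (-(x ^ w)) ^ k := by
      intro k
      simp only [F]
      rw [show p + w * k - 1 = (p - 1) + w * k by ring, Real.rpow_add hx0, Real.rpow_mul hx0.le,
        Real.rpow_natCast, neg_pow (x ^ w)]
      ring
    simp_rw [this]
    rw [hg.tsum_eq]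
    rw [sub_neg_eq_add, add_comm 1, div_eq_mul_inv]

lemma aux_K_trigamma {q : ℝ} (hq : 1 / 2 < q) :
    q * (∫ x in Ioo (0:ℝ) 1, x ^ (3 * q - 1 - 1) * Real.log x / (x ^ (3 * q) + 1)) =
    (1 / (36 * q)) * (trigamma ((6 * q - 1) / (6 * q)) - trigamma ((3 * q - 1) / (6 * q))) := by
  have hq0 : 0 < q := by linarith
  have h := (aux_K (p := 3 * q - 1) (w := 3 * q) (by linarith) (by linarith)).2
  have p1 : 0 < (6 * q - 1) / (6 * q) := div_pos (by linarith) (by linarith)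
  have p2 : 0 < (3 * q - 1) / (6 * q) := div_pos (by linarith) (by linarith)
  have s1 := (aux_summable_sq p1).hasSum.mul_left (1 / (36 * q ^ 2))
  have s2 := (aux_summable_sq p2).hasSum.mul_left (-(1 / (36 * q ^ 2)))
  rw [← aux_trigamma p1] at s1
  rw [← aux_trigamma p2] at s2
  have h' := HasSum.even_add_odd (f := fun k : ℕ => (-1 : ℝ) ^ k * -(1 / (3 * q - 1 + 3 * q * k) ^ 2))
    (m := -(1 / (36 * q ^ 2)) * trigamma ((3 * q - 1) / (6 * q)))
    (m' := (1 / (36 * q ^ 2)) * trigamma ((6 * q - 1) / (6 * q))) ?_ ?_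
  · rw [h.unique h']
    field_simp
    ring
  · refine s2.congr_fun ?_
    intro k
    have : (3 * q - 1) / (6 * q) + k = (3 * q - 1 + 3 * q * ((2 * k : ℕ) : ℝ)) / (6 * q) := by
      push_cast; field_simp; ring
    rw [this, pow_mul]
    have : 0 < 3 * q - 1 + 3 * q * ((2 * k : ℕ) : ℝ) := by
      have : 0 ≤ 3 * q * ((2 * k : ℕ) : ℝ) := by positivity
      linarith
    field_simp
    norm_num
  · refine s1.congr_fun ?_
    intro k
    have : (6 * q - 1) / (6 * q) + k = (3 * q - 1 + 3 * q * ((2 * k + 1 : ℕ) : ℝ)) / (6 * q) := by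
      push_cast; field_simp; ring
    rw [this, pow_succ, pow_mul]
    have : 0 < 3 * q - 1 + 3 * q * ((2 * k + 1 : ℕ) : ℝ) := by
      have : 0 ≤ 3 * q * ((2 * k + 1 : ℕ) : ℝ) := by positivity
      linarith
    field_simp
    norm_num

lemma aux_beta {s b : ℝ} (hs : 0 < s) (hb : 0 < b) :
    IntegrableOn (fun x : ℝ => x ^ (s - 1) * (1 - x) ^ (b - 1)) (Ioo 0 1) ∧
    ∫ x in Ioo (0:ℝ) 1, x ^ (s - 1) * (1 - x) ^ (b - 1)
      = Real.Gamma s * Real.Gamma b / Real.Gamma (s + b) := by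
  have hconv := Complex.betaIntegral_convergent (u := s) (v := b) (by simpa) (by simpa)
  rw [intervalIntegrable_iff_integrableOn_Ioo_of_le zero_le_one] at hconv
  have heq : EqOn (fun x : ℝ => (x:ℂ) ^ ((s:ℂ) - 1) * (1 - (x:ℂ)) ^ ((b:ℂ) - 1))
      (fun x : ℝ => ((x ^ (s - 1) * (1 - x) ^ (b - 1) : ℝ) : ℂ)) (Ioo 0 1) := by
    intro x hx
    simp only
    rw [Complex.ofReal_mul, Complex.ofReal_cpow hx.1.le, Complex.ofReal_cpow (by linarith [hx.2])]
    push_cast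
    rfl
  have hB := Complex.betaIntegral_eq_Gamma_mul_div (s:ℂ) (b:ℂ) (by simpa) (by simpa)
  rw [Complex.betaIntegral, intervalIntegral.integral_of_le zero_le_one,
    integral_Ioc_eq_integral_Ioo, setIntegral_congr_fun measurableSet_Ioo heq, integral_complex_ofReal,
    ← Complex.ofReal_add, Complex.Gamma_ofReal, Complex.Gamma_ofReal, Complex.Gamma_ofReal] at hB
  constructor
  · have h2 := (hconv.congr_fun heq measurableSet_Ioo).re
    simpa [IntegrableOn] using h2
  · exact_mod_cast hB

lemma aux_beta_log {s b : ℝ} (hs : 0 < s) (hb : 1 < b) :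
    IntegrableOn (fun x : ℝ => x ^ (s - 1) * ((1 - x) ^ (b - 1) * Real.log (1 - x))) (Ioo 0 1) ∧
    ∫ x in Ioo (0:ℝ) 1, x ^ (s - 1) * ((1 - x) ^ (b - 1) * Real.log (1 - x))
      = Real.Gamma s * Real.Gamma b / Real.Gamma (s + b) * (digamma b - digamma (s + b)) := by
  set ε := (b - 1) / 2 with hε
  have hε0 : 0 < ε := by linarith
  have hnb : Ioi (1 + ε) ∈ 𝓝 b := Ioi_mem_nhds (by linarith)
  have hbound_int : IntegrableOn (fun x : ℝ => x ^ (s - 1) * (1 / ε)) (Ioo 0 1) := by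
    have := (aux_beta hs one_pos).1.mul_const (1 / ε)
    simpa [IntegrableOn] using this
  have key := hasDerivAt_integral_of_dominated_loc_of_deriv_le (μ := volume.restrict (Ioo (0:ℝ) 1))
    (F := fun b x => x ^ (s - 1) * (1 - x) ^ (b - 1))
    (F' := fun b x => x ^ (s - 1) * ((1 - x) ^ (b - 1) * Real.log (1 - x)))
    (bound := fun x : ℝ => x ^ (s - 1) * (1 / ε)) hnb
    (Eventually.of_forall fun c => Measurable.aestronglyMeasurable (by fun_prop))
    (aux_beta hs (by linarith)).1
    (Measurable.aestronglyMeasurable (by fun_prop)) ?_ hbound_int ?_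
  · refine ⟨key.1, ?_⟩
    have hΓb := Real.Gamma_pos_of_pos (show 0 < b by linarith)
    have hΓ := Real.Gamma_pos_of_pos (show 0 < s + b by linarith)
    have h1 : HasDerivAt (fun c : ℝ => Real.Gamma (s + c)) (deriv Real.Gamma (s + b)) b :=
      (aux_diffGamma (x := s + b) (by linarith)).hasDerivAt.comp_const_add s b
    have h2 := (((aux_diffGamma (x := b) (by linarith)).hasDerivAt.const_mul (Real.Gamma s)).div h1 hΓ.ne')
    have h3 := h2.congr_of_eventuallyEq (f₁ := fun c => ∫ x in Ioo (0:ℝ) 1, x ^ (s - 1) * (1 - x) ^ (c - 1)) ?_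
    · rw [key.2.unique h3]
      unfold digamma
      field_simp
    · filter_upwards [lt_mem_nhds (show 0 < b by linarith)] with c hc
      exact (aux_beta hs hc).2
  · filter_upwards [ae_restrict_mem measurableSet_Ioo] with x hx c hc
    have hc' : 1 + ε < c := hc
    have h1x : 0 < 1 - x := by linarith [hx.2]
    have h1x' : 1 - x ≤ 1 := by linarith [hx.1]
    have hx0 : 0 ≤ x ^ (s - 1) := Real.rpow_nonneg hx.1.le _
    rw [norm_mul, Real.norm_of_nonneg hx0]
    gcongr
    have h1 := (Real.abs_log_mul_self_rpow_lt (1 - x) ε h1x h1x' hε0).le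
    refine le_trans ?_ h1
    rw [mul_comm, Real.norm_eq_abs, abs_mul, abs_mul]
    gcongr ?_ * ?_
    rw [abs_of_pos (Real.rpow_pos_of_pos h1x _), abs_of_pos (Real.rpow_pos_of_pos h1x _)]
    exact Real.rpow_le_rpow_of_exponent_ge h1x h1x' (by linarith)
  · filter_upwards [ae_restrict_mem measurableSet_Ioo] with x hx c hc
    have h1x : 0 < 1 - x := by linarith [hx.2]
    apply HasDerivAt.const_mul
    have h1 : HasDerivAt (fun c : ℝ => c - 1) 1 c := (hasDerivAt_id c).sub_const 1
    have := h1.const_rpow h1x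
    refine this.congr_deriv ?_
    ring

lemma aux_J {a : ℝ} (ha : 0 < a) (ha2 : a < 2) :
    IntegrableOn (fun u : ℝ => -(u ^ (a - 1) * ((1 - u) ^ (2 - a) * Real.log (1 - u))) / (1 - 3 * (u * (1 - u)))) (Ioo 0 1) ∧
    HasSum (fun n : ℕ => (3 : ℝ) ^ n * Real.Gamma ((n : ℝ) + 3 - a) * Real.Gamma ((n : ℝ) + a)
            / (Nat.factorial (2 * n + 2))
          * (digamma (2 * (n : ℝ) + 3) - digamma ((n : ℝ) + 3 - a)))
      (∫ u in Ioo (0:ℝ) 1, -(u ^ (a - 1) * ((1 - u) ^ (2 - a) * Real.log (1 - u))) / (1 - 3 * (u * (1 - u)))) := by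
  let F0 : ℝ → ℝ := fun u => -(u ^ (a - 1) * ((1 - u) ^ (2 - a) * Real.log (1 - u)))
  let F : ℕ → ℝ → ℝ := fun n u => (3 * (u * (1 - u))) ^ n * F0 u
  have hr : ∀ u : ℝ, 3 * (u * (1 - u)) ≤ 3 / 4 := fun u => by nlinarith [sq_nonneg (u - 1 / 2)]
  have hr0 : ∀ u ∈ Ioo (0:ℝ) 1, 0 ≤ 3 * (u * (1 - u)) := fun u hu =>
    mul_nonneg (by norm_num) (mul_nonneg hu.1.le (by linarith [hu.2]))
  have hF0 : IntegrableOn F0 (Ioo 0 1) := by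
    have := (aux_beta_log (s := a) (b := 3 - a) ha (by linarith)).1.neg
    rw [show 3 - a - 1 = 2 - a by ring] at this
    exact this
  have hm0 : Measurable F0 := by fun_prop
  have hle : ∀ n, ∀ u ∈ Ioo (0:ℝ) 1, ‖F n u‖ ≤ (3 / 4) ^ n * ‖F0 u‖ := by
    intro n u hu
    simp only [F]
    rw [norm_mul, norm_pow, Real.norm_of_nonneg (hr0 u hu)]
    gcongr
    · exact hr0 u hu
    · exact hr u
  have hFi : ∀ n, IntegrableOn (F n) (Ioo 0 1) := by
    intro n
    refine Integrable.mono' (hF0.norm.const_mul ((3 / 4) ^ n)) ?_ ?_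
    · exact Measurable.aestronglyMeasurable (by fun_prop)
    · filter_upwards [ae_restrict_mem measurableSet_Ioo] with u hu using hle n u hu
  have hs : Summable fun n => ∫ u in Ioo (0:ℝ) 1, ‖F n u‖ := by
    refine Summable.of_nonneg_of_le (fun n => integral_nonneg fun u => norm_nonneg _) (fun n => ?_)
      ((summable_geometric_of_lt_one (r := 3 / 4) (by norm_num) (by norm_num)).mul_right
        (∫ u in Ioo (0:ℝ) 1, ‖F0 u‖))
    rw [← integral_const_mul]
    exact setIntegral_mono_on (hFi n).norm (hF0.norm.const_mul _) measurableSet_Ioo (hle n)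
  have key := hasSum_integral_of_summable_integral_norm hFi hs
  have hF : ∀ n : ℕ, ∫ u in Ioo (0:ℝ) 1, F n u = (3 : ℝ) ^ n * Real.Gamma ((n : ℝ) + 3 - a) * Real.Gamma ((n : ℝ) + a)
            / (Nat.factorial (2 * n + 2))
          * (digamma (2 * (n : ℝ) + 3) - digamma ((n : ℝ) + 3 - a)) := by
    intro n
    have hn : (0:ℝ) ≤ n := Nat.cast_nonneg n
    have h := (aux_beta_log (s := n + a) (b := n + 3 - a) (by positivity) (by linarith)).2
    have e1 : (n : ℝ) + a + (n + 3 - a) = 2 * n + 3 := by ring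
    have e2 : Real.Gamma (2 * (n : ℝ) + 3) = (Nat.factorial (2 * n + 2)) := by
      rw [← Real.Gamma_nat_eq_factorial]
      push_cast
      ring_nf
    rw [e1, e2] at h
    have e3 : ∫ u in Ioo (0:ℝ) 1, F n u = ∫ u in Ioo (0:ℝ) 1,
        -(3:ℝ) ^ n * (u ^ ((n:ℝ) + a - 1) * ((1 - u) ^ ((n:ℝ) + 3 - a - 1) * Real.log (1 - u))) := by
      apply setIntegral_congr_fun measurableSet_Ioo
      intro u hu
      have hu1 : 0 < 1 - u := by linarith [hu.2]
      simp only [F, F0]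
      rw [show (n:ℝ) + a - 1 = n + (a - 1) by ring, show (n:ℝ) + 3 - a - 1 = n + (2 - a) by ring,
        Real.rpow_add hu.1, Real.rpow_add hu1, Real.rpow_natCast, Real.rpow_natCast, mul_pow, mul_pow]
      ring
    rw [e3, integral_const_mul, h]
    ring
  simp_rw [hF] at key
  constructor
  · refine Integrable.mono' (hF0.norm.const_mul 4) ?_ ?_
    · exact Measurable.aestronglyMeasurable (by fun_prop)
    · filter_upwards [ae_restrict_mem measurableSet_Ioo] with u hu
      rw [norm_div, div_le_iff₀, Real.norm_of_nonneg (r := 1 - 3 * (u * (1 - u)))]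
      · have : 0 ≤ ‖F0 u‖ := norm_nonneg _
        change ‖F0 u‖ ≤ _
        nlinarith [hr u]
      · linarith [hr u]
      · rw [Real.norm_of_nonneg] <;> linarith [hr u]
  · suffices e : ∫ u in Ioo (0:ℝ) 1, -(u ^ (a - 1) * ((1 - u) ^ (2 - a) * Real.log (1 - u))) / (1 - 3 * (u * (1 - u))) =
        ∫ u in Ioo (0:ℝ) 1, ∑' i, F i u by rw [e]; exact key
    apply setIntegral_congr_fun measurableSet_Ioo
    intro u hu
    have hg := (hasSum_geometric_of_lt_one (hr0 u hu) (lt_of_le_of_lt (hr u) (by norm_num))).mul_right (F0 u)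
    simp only [F]
    rw [hg.tsum_eq, div_eq_mul_inv, mul_comm]

lemma aux_fold {h : ℝ → ℝ} (hh : IntegrableOn h (Ioo 0 1)) :
    IntegrableOn (fun u => h u + h (1 - u)) (Ioo 0 (1 / 2)) ∧
    ∫ u in Ioo (0:ℝ) 1, h u = ∫ u in Ioo (0:ℝ) (1 / 2), (h u + h (1 - u)) := by
  have h01 : IntervalIntegrable h volume 0 1 :=
    (intervalIntegrable_iff_integrableOn_Ioo_of_le zero_le_one).2 hh
  have i1 : IntervalIntegrable h volume 0 (1 / 2) := h01.mono_set (by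
    rw [uIcc_of_le (by norm_num), uIcc_of_le (by norm_num)]
    exact Icc_subset_Icc le_rfl (by norm_num))
  have i2 : IntervalIntegrable h volume (1 / 2) 1 := h01.mono_set (by
    rw [uIcc_of_le (by norm_num), uIcc_of_le (by norm_num)]
    exact Icc_subset_Icc (by norm_num) le_rfl)
  have i3 : IntervalIntegrable (fun u => h (1 - u)) volume 0 (1 / 2) := by
    have := (i2.comp_sub_left 1).symm
    norm_num at this ⊢
    exact this
  constructor
  · exact (intervalIntegrable_iff_integrableOn_Ioo_of_le (by norm_num)).1 (i1.add i3)
  · rw [← integral_Ioc_eq_integral_Ioo, ← integral_Ioc_eq_integral_Ioo,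
      ← intervalIntegral.integral_of_le zero_le_one, ← intervalIntegral.integral_of_le (by norm_num),
      intervalIntegral.integral_add i1 i3, intervalIntegral.integral_comp_sub_left,
      ← intervalIntegral.integral_add_adjacent_intervals i1 i2]
    norm_num

lemma aux_image {q : ℝ} (hq : 0 < q) :
    (fun x : ℝ => x ^ q / (1 + x ^ q)) '' (Ioo 0 1) = Ioo 0 (1 / 2) := by
  ext u
  constructor
  · rintro ⟨x, hx, rfl⟩
    have h0 : 0 < x ^ q := Real.rpow_pos_of_pos hx.1 _
    have h1 : x ^ q < 1 := Real.rpow_lt_one hx.1.le hx.2 hq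
    refine ⟨by positivity, ?_⟩
    simp only
    rw [div_lt_div_iff₀ (by positivity) (by norm_num)]
    linarith
  · intro hu
    have hu0 : 0 < u := hu.1
    have hu1 : u < 1 / 2 := hu.2
    have h1 : 0 < 1 - u := by linarith
    have hp : 0 < u / (1 - u) := by positivity
    refine ⟨(u / (1 - u)) ^ (1 / q), ⟨by positivity, Real.rpow_lt_one hp.le ?_ (by positivity)⟩, ?_⟩
    · rw [div_lt_one h1]; linarith
    · simp only
      rw [← Real.rpow_mul hp.le, one_div_mul_cancel hq.ne', Real.rpow_one]
      field_simp
      ring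

lemma aux_injOn {q : ℝ} (hq : 0 < q) :
    InjOn (fun x : ℝ => x ^ q / (1 + x ^ q)) (Ioo 0 1) := by
  intro x hx y hy hxy
  have h0 : 0 < x ^ q := Real.rpow_pos_of_pos hx.1 _
  have h1 : 0 < y ^ q := Real.rpow_pos_of_pos hy.1 _
  simp only at hxy
  rw [div_eq_div_iff (by positivity) (by positivity)] at hxy
  exact Real.rpow_left_injOn hq.ne' hx.1.le hy.1.le (by simp only; linarith)

lemma aux_pointwise {q x : ℝ} (hq : 1 / 2 < q) (hx : x ∈ Ioo (0:ℝ) 1) (h : ℝ → ℝ)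
    (hh : h = fun u : ℝ => -(u ^ (1 / q - 1) * ((1 - u) ^ (2 - 1 / q) * Real.log (1 - u))) / (1 - 3 * (u * (1 - u)))) :
    |q * x ^ (q - 1) / (1 + x ^ q) ^ 2| • (h (x ^ q / (1 + x ^ q)) + h (1 - x ^ q / (1 + x ^ q)))
     = q * ((x ^ (3 * q - 2) + 1) * Real.log (x ^ q + 1) / (x ^ (3 * q) + 1)
        - q * (x ^ (3 * q - 1 - 1) * Real.log x / (x ^ (3 * q) + 1))) := by
  have hq0 : 0 < q := by linarith
  have hx0 := hx.1
  have e1 : x ^ (q - 1) = x ^ q / x := by rw [Real.rpow_sub_one hx0.ne']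
  have e2 : x ^ (3 * q) = (x ^ q) ^ 3 := by
    rw [mul_comm, Real.rpow_mul hx0.le]; norm_cast
  have e3 : x ^ (3 * q - 2) = (x ^ q) ^ 3 / x ^ 2 := by
    rw [Real.rpow_sub hx0, e2]; norm_cast
  have e4 : x ^ (3 * q - 1 - 1) = (x ^ q) ^ 3 / x ^ 2 := by
    rw [← e3]; ring_nf
  have e5 : (x ^ q) ^ (1 / q) = x := by
    rw [← Real.rpow_mul hx0.le, mul_one_div_cancel hq0.ne', Real.rpow_one]
  have e6 : Real.log (x ^ q) = q * Real.log x := Real.log_rpow hx0 q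
  rw [e1, e2, e3, e4]
  have ht : 0 < x ^ q := Real.rpow_pos_of_pos hx0 _
  set t := x ^ q with htdef
  clear_value t
  have h1t : 0 < 1 + t := by linarith
  have f1 : 1 - t / (1 + t) = 1 / (1 + t) := by field_simp; ring
  have f2 : (1:ℝ) - 1 / (1 + t) = t / (1 + t) := by field_simp; ring
  have hw : 0 < (1 + t) ^ (1 / q) := Real.rpow_pos_of_pos h1t _
  have g1 : (t / (1 + t)) ^ (1 / q - 1) = (x / (1 + t) ^ (1 / q)) / (t / (1 + t)) := by
    rw [Real.rpow_sub_one (by positivity), Real.div_rpow ht.le h1t.le, e5]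
  have g2 : (1 / (1 + t)) ^ (1 / q - 1) = (1 / (1 + t) ^ (1 / q)) / (1 / (1 + t)) := by
    rw [Real.rpow_sub_one (by positivity), Real.div_rpow zero_le_one h1t.le, Real.one_rpow]
  have g3 : (t / (1 + t)) ^ (2 - 1 / q) = (t / (1 + t)) ^ 2 / (x / (1 + t) ^ (1 / q)) := by
    rw [Real.rpow_sub (by positivity), Real.div_rpow ht.le h1t.le (1 / q), e5]; norm_cast
  have g4 : (1 / (1 + t)) ^ (2 - 1 / q) = (1 / (1 + t)) ^ 2 / (1 / (1 + t) ^ (1 / q)) := by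
    rw [Real.rpow_sub (by positivity), Real.div_rpow zero_le_one h1t.le (1 / q), Real.one_rpow]; norm_cast
  have l1 : Real.log (1 / (1 + t)) = - Real.log (t + 1) := by
    rw [one_div, Real.log_inv, add_comm]
  have l2 : Real.log (t / (1 + t)) = q * Real.log x - Real.log (t + 1) := by
    rw [Real.log_div ht.ne' h1t.ne', e6, add_comm]
  have hd : 0 < t ^ 2 - t + 1 := by nlinarith [sq_nonneg (t - 1)]
  have d1 : 1 - 3 * (t / (1 + t) * (1 / (1 + t))) = (t ^ 2 - t + 1) / (1 + t) ^ 2 := by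
    field_simp; ring
  have d2 : 1 - 3 * (1 / (1 + t) * (t / (1 + t))) = (t ^ 2 - t + 1) / (1 + t) ^ 2 := by
    field_simp; ring
  have d3 : t ^ 3 + 1 = (1 + t) * (t ^ 2 - t + 1) := by ring
  rw [abs_of_pos (by positivity), hh, smul_eq_mul]
  simp only
  rw [f1, f2, g1, g2, g3, g4, l1, l2, d1, d2, d3]
  generalize Real.log (t + 1) = L
  generalize Real.log x = M
  generalize (1 + t) ^ (1 / q) = w at *
  generalize t ^ 2 - t + 1 = d at *
  field_simp
  ring

theorem integral_log_rpow_half_three (q : ℝ) (hq : 1 / 2 < q) :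
    (∫ x in (0:ℝ)..1, (x ^ (3 * q - 2) + 1) * Real.log (x ^ q + 1) / (x ^ (3 * q) + 1)) =
      (1 / (36 * q)) * (trigamma ((6 * q - 1) / (6 * q)) - trigamma ((3 * q - 1) / (6 * q)))
      + (1 / q) * ∑' n : ℕ,
          (3 : ℝ) ^ n * Real.Gamma ((n : ℝ) + 3 - 1 / q) * Real.Gamma ((n : ℝ) + 1 / q)
            / (Nat.factorial (2 * n + 2))
          * (digamma (2 * (n : ℝ) + 3) - digamma ((n : ℝ) + 3 - 1 / q)) := by
  have hq0 : 0 < q := by linarith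
  obtain ⟨hJi, hJ⟩ := aux_J (a := 1 / q) (by positivity) (by
    rw [div_lt_iff₀ hq0]; linarith)
  rw [hJ.tsum_eq, ← aux_K_trigamma hq]
  have hKi := (aux_K (p := 3 * q - 1) (w := 3 * q) (by linarith) (by linarith)).1
  obtain ⟨hGi, hG⟩ := aux_fold hJi
  rw [hG]
  obtain ⟨h, hh⟩ : ∃ h : ℝ → ℝ, h = fun u : ℝ => -(u ^ (1 / q - 1) * ((1 - u) ^ (2 - 1 / q) * Real.log (1 - u))) / (1 - 3 * (u * (1 - u))) := ⟨_, rfl⟩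
  have hGi' : IntegrableOn (fun u => h u + h (1 - u)) (Ioo 0 (1 / 2)) := by
    rw [hh]; exact hGi
  have hGe : ∫ u in Ioo (0:ℝ) (1 / 2), (-(u ^ (1 / q - 1) * ((1 - u) ^ (2 - 1 / q) * Real.log (1 - u))) / (1 - 3 * (u * (1 - u)))
      + -((1 - u) ^ (1 / q - 1) * ((1 - (1 - u)) ^ (2 - 1 / q) * Real.log (1 - (1 - u)))) / (1 - 3 * ((1 - u) * (1 - (1 - u)))))
      = ∫ u in Ioo (0:ℝ) (1 / 2), (h u + h (1 - u)) := by rw [hh]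
  rw [hGe]
  have hder : ∀ x ∈ Ioo (0:ℝ) 1, HasDerivWithinAt (fun x : ℝ => x ^ q / (1 + x ^ q))
      (q * x ^ (q - 1) / (1 + x ^ q) ^ 2) (Ioo 0 1) x := by
    intro x hx
    have h0 : 0 < x ^ q := Real.rpow_pos_of_pos hx.1 _
    have h1 : HasDerivAt (fun x : ℝ => x ^ q) (q * x ^ (q - 1)) x :=
      Real.hasDerivAt_rpow_const (Or.inl hx.1.ne')
    have h2 := (h1.div (h1.const_add 1) (by positivity)).hasDerivWithinAt (s := Ioo 0 1)
    refine h2.congr_deriv ?_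
    ring
  have c1 := integral_image_eq_integral_abs_deriv_smul measurableSet_Ioo hder (aux_injOn hq0)
    (fun u => h u + h (1 - u))
  have c2 := integrableOn_image_iff_integrableOn_abs_deriv_smul measurableSet_Ioo hder (aux_injOn hq0)
    (fun u => h u + h (1 - u))
  rw [aux_image hq0] at c1 c2
  have c2' := c2.1 hGi'
  have hpt : EqOn (fun x : ℝ => |q * x ^ (q - 1) / (1 + x ^ q) ^ 2| • (h (x ^ q / (1 + x ^ q)) + h (1 - x ^ q / (1 + x ^ q))))
      (fun x : ℝ => q * ((x ^ (3 * q - 2) + 1) * Real.log (x ^ q + 1) / (x ^ (3 * q) + 1)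
        - q * (x ^ (3 * q - 1 - 1) * Real.log x / (x ^ (3 * q) + 1)))) (Ioo 0 1) :=
    fun x hx => aux_pointwise hq hx h hh
  have c3 := c2'.congr_fun hpt measurableSet_Ioo
  rw [c1, setIntegral_congr_fun measurableSet_Ioo hpt, intervalIntegral.integral_of_le zero_le_one,
    integral_Ioc_eq_integral_Ioo, ← integral_const_mul, ← integral_const_mul,
    ← integral_add (hKi.const_mul q) (c3.const_mul (1 / q))]
  apply setIntegral_congr_fun measurableSet_Ioo
  intro x hx
  simp only
  rw [← mul_assoc (1 / q), one_div_mul_cancel hq0.ne']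
  ring
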